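/- Let φ₀ : P → P be the automorphism determined by a ↦ a⁻¹, b ↦ b⁻¹, and let χ₀ : P → Rˣ be the group homomorphism determined by a ↦ −s², b ↦ −t². Then the R-algebra automorphism θ₀ of R[P] determined by θ₀(Σ_g λ_g·g) = Σ_g χ₀(g)·λ_g·φ₀(g) satisfies θ₀(α) = α (α is θ₀-symmetric). -/

import Mathlib

open MvPolynomial

noncomputable section

/-- The two relators of the Promislow group `P = ⟨a, b | b⁻¹a²b = a⁻², a⁻¹b²a = b⁻²⟩`,
written as words that equal the identity: `b⁻¹a²ba²` and `a⁻¹b²ab²`. -/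
def Prels : Set (FreeGroup (Fin 2)) :=
  {(FreeGroup.of 1)⁻¹ * (FreeGroup.of 0) ^ 2 * (FreeGroup.of 1) * (FreeGroup.of 0) ^ 2,
   (FreeGroup.of 0)⁻¹ * (FreeGroup.of 1) ^ 2 * (FreeGroup.of 0) * (FreeGroup.of 1) ^ 2}

/-- The Promislow group. -/
abbrev P : Type := PresentedGroup Prels

def pa : P := PresentedGroup.of 0
def pb : P := PresentedGroup.of 1
def px : P := pa ^ 2
def py : P := pb ^ 2
def pz : P := (pa * pb) ^ 2

/-- The ring `R = ℤ[s,t]/⟨s⁴+1, t⁴+1⟩`. -/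
abbrev Rr : Type :=
  MvPolynomial (Fin 2) ℤ ⧸
    Ideal.span {(X 0 : MvPolynomial (Fin 2) ℤ) ^ 4 + 1, (X 1 : MvPolynomial (Fin 2) ℤ) ^ 4 + 1}

def s : Rr := Ideal.Quotient.mk _ (X 0)
def t : Rr := Ideal.Quotient.mk _ (X 1)

/-- The image of a group element in the group ring `R[P]`. -/
def G (g : P) : MonoidAlgebra Rr P := MonoidAlgebra.of Rr P g

def α1 : MonoidAlgebra Rr P :=
  1 + t ^ 2 • G (px * pz⁻¹) - t ^ 2 • G (px⁻¹ * pz⁻¹) - s ^ 2 • G (py * pz⁻¹)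
    + s ^ 2 • G (py⁻¹ * pz⁻¹)

def αa : MonoidAlgebra Rr P :=
  -(s ^ 2 • G px⁻¹) + 1 - G (px⁻¹ * py⁻¹ * pz) + s ^ 2 • G (py * pz)

def αb : MonoidAlgebra Rr P :=
  G (px⁻¹ * py⁻¹ * pz) - t ^ 2 • G (px * pz) + t ^ 2 • G (py⁻¹ * pz ^ 2) - G (pz ^ 2)

def αab : MonoidAlgebra Rr P :=
  -(t ^ 2 • G (px⁻¹ * pz⁻¹)) - s ^ 2 • G (py * pz⁻¹) + (s ^ 2 * t ^ 2) • G pz⁻¹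
    + G (px⁻¹ * py * pz⁻¹) + s ^ 2 • G (px⁻¹ * pz⁻¹ ^ 2) + t ^ 2 • G (py * pz⁻¹ ^ 2)
    - G (pz⁻¹ ^ 2) - (s ^ 2 * t ^ 2) • G (px⁻¹ * py * pz⁻¹ ^ 2)

/-- The unit `α ∈ R[P]`. -/
def αU : MonoidAlgebra Rr P :=
  α1 + s • (αa * G pa) + t • (αb * G pb) + (s * t) • (αab * G (pa * pb))

def β1 : MonoidAlgebra Rr P :=
  1 + t ^ 2 • G (px⁻¹ * pz) - t ^ 2 • G (px * pz) + s ^ 2 • G (py * pz) - s ^ 2 • G (py⁻¹ * pz)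

def βa : MonoidAlgebra Rr P :=
  -1 + s ^ 2 • G px⁻¹ - s ^ 2 • G (py * pz) + G (px⁻¹ * py⁻¹ * pz)

def βb : MonoidAlgebra Rr P :=
  -G (px⁻¹ * py⁻¹ * pz) + t ^ 2 • G (px * pz) - t ^ 2 • G (py⁻¹ * pz ^ 2) + G (pz ^ 2)

def βab : MonoidAlgebra Rr P :=
  (s ^ 2 * t ^ 2) • G (px⁻¹ * py) + 1 - t ^ 2 • G py - s ^ 2 • G px⁻¹
    - G (px⁻¹ * py * pz) - (s ^ 2 * t ^ 2) • G pz + s ^ 2 • G (py * pz) + t ^ 2 • G (px⁻¹ * pz)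

/-- The inverse unit `β ∈ R[P]`. -/
def βU : MonoidAlgebra Rr P :=
  β1 + s • (βa * G pa) + t • (βb * G pb) + (s * t) • (βab * G (pa * pb))


lemma rel1 : pb⁻¹ * pa ^ 2 * pb * pa ^ 2 = 1 :=
  PresentedGroup.one_of_mem (rels := Prels) (by left; rfl)

lemma rel2 : pa⁻¹ * pb ^ 2 * pa * pb ^ 2 = 1 :=
  PresentedGroup.one_of_mem (rels := Prels) (by right; rfl)

lemma s4 : s ^ 4 = -1 := by
  have h : s ^ 4 + 1 = 0 := by
    have : (Ideal.Quotient.mk (Ideal.span {(X 0 : MvPolynomial (Fin 2) ℤ) ^ 4 + 1,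
      (X 1 : MvPolynomial (Fin 2) ℤ) ^ 4 + 1})) ((X 0) ^ 4 + 1) = 0 :=
      Ideal.Quotient.eq_zero_iff_mem.2 (Ideal.subset_span (by left; rfl))
    simpa [s] using this
  exact eq_neg_of_add_eq_zero_left h

lemma t4 : t ^ 4 = -1 := by
  have h : t ^ 4 + 1 = 0 := by
    have : (Ideal.Quotient.mk (Ideal.span {(X 0 : MvPolynomial (Fin 2) ℤ) ^ 4 + 1,
      (X 1 : MvPolynomial (Fin 2) ℤ) ^ 4 + 1})) ((X 1) ^ 4 + 1) = 0 :=
      Ideal.Quotient.eq_zero_iff_mem.2 (Ideal.subset_span (by right; rfl))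
    simpa [t] using this
  exact eq_neg_of_add_eq_zero_left h

def us : Rrˣ := ⟨-s ^ 2, s ^ 2, by linear_combination -s4, by linear_combination -s4⟩
def ut : Rrˣ := ⟨-t ^ 2, t ^ 2, by linear_combination -t4, by linear_combination -t4⟩

lemma us4 : us ^ 4 = 1 := by
  ext; simp only [us, Units.val_pow_eq_pow_val, Units.val_one]
  linear_combination (s ^ 4 - 1) * s4
lemma ut4 : ut ^ 4 = 1 := by
  ext; simp only [ut, Units.val_pow_eq_pow_val, Units.val_one]
  linear_combination (t ^ 4 - 1) * t4

lemma comm_rel {K : Type*} [CommGroup K] (u v : K) (h : u ^ 4 = 1) :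
    v⁻¹ * u ^ 2 * v * u ^ 2 = 1 := by
  rw [← h, mul_comm v⁻¹, inv_mul_cancel_right, ← pow_add]

def chi : P →* Rrˣ := PresentedGroup.toGroup (f := ![us, ut]) (by
  rintro r (rfl | rfl)
  · simp only [map_mul, map_inv, map_pow, FreeGroup.lift_apply_of, Matrix.cons_val_zero,
      Matrix.cons_val_one]
    exact comm_rel us ut us4
  · simp only [map_mul, map_inv, map_pow, FreeGroup.lift_apply_of, Matrix.cons_val_zero,
      Matrix.cons_val_one]
    exact comm_rel ut us ut4)

lemma chi_a : chi pa = us := PresentedGroup.toGroup.of _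
lemma chi_b : chi pb = ut := PresentedGroup.toGroup.of _

/-- conjugation rules -/
lemma xb : px * pb = pb * px⁻¹ := by
  have := rel1
  rw [px, eq_mul_inv_iff_mul_eq]
  calc _ = pb * (pb⁻¹ * pa ^ 2 * pb * pa ^ 2) := by group
    _ = _ := by rw [this, mul_one]
lemma ya : py * pa = pa * py⁻¹ := by
  have := rel2
  rw [py, eq_mul_inv_iff_mul_eq]
  calc _ = pa * (pa⁻¹ * pb ^ 2 * pa * pb ^ 2) := by group
    _ = _ := by rw [this, mul_one]
lemma xa : Commute px pa := (Commute.refl pa).pow_left 2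
lemma yb : Commute py pb := (Commute.refl pb).pow_left 2
lemma sxb : SemiconjBy pb px⁻¹ px := xb.symm
lemma sya : SemiconjBy pa py⁻¹ py := ya.symm
lemma sxb' : SemiconjBy pb px px⁻¹ := by simpa using sxb.inv_right
lemma sya' : SemiconjBy pa py py⁻¹ := by simpa using sya.inv_right
lemma cxy : Commute px py := by
  have : SemiconjBy (pb * pb) px px := sxb.mul_left sxb'
  rw [py, pow_two]; exact this.symm
lemma abx : SemiconjBy (pa * pb) px px⁻¹ := SemiconjBy.mul_left xa.symm.inv_right sxb'
lemma aby : SemiconjBy (pa * pb) py py⁻¹ := SemiconjBy.mul_left sya' yb.symm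
lemma cxz : Commute px pz := by
  have h : SemiconjBy ((pa * pb) * (pa * pb)) px px := by simpa using abx.inv_right.mul_left abx
  rw [pz, pow_two]; exact h.symm
lemma cyz : Commute py pz := by
  have h : SemiconjBy ((pa * pb) * (pa * pb)) py py := by simpa using aby.inv_right.mul_left aby
  rw [pz, pow_two]; exact h.symm

lemma ainv : pa⁻¹ = px⁻¹ * pa := by rw [px]; group
lemma binv : pb⁻¹ = py⁻¹ * pb := by rw [py]; group

lemma abab : pa * pb * pa * pb * (pb * pa * pb * pa) = 1 := by
  calc _ = pa * pb * (pa * py) * pa * pb * pa := by rw [py, pow_two]; group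
    _ = pa * (pb * py⁻¹) * px * pb * pa := by rw [sya'.eq, px, pow_two]; group
    _ = pa * (py⁻¹ * pb) * (px * pb) * pa := by rw [yb.inv_left.eq]; group
    _ = pa * (py⁻¹ * (pb * pb) * px⁻¹) * pa := by rw [xb]; group
    _ = 1 := by rw [px, py]; group

lemma zphi : (pa⁻¹ * pb⁻¹) ^ 2 = pz := by
  have : (pa⁻¹ * pb⁻¹) ^ 2 = (pb * pa * pb * pa)⁻¹ := by rw [pow_two]; group
  rw [this, pz, inv_eq_of_mul_eq_one_left]
  rw [← abab, pow_two]; group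

def phi : P →* P := PresentedGroup.toGroup (f := ![pa⁻¹, pb⁻¹]) (by
  rintro r (rfl | rfl)
  · simp only [map_mul, map_inv, map_pow, FreeGroup.lift_apply_of, Matrix.cons_val_zero,
      Matrix.cons_val_one]
    have h : pb * px⁻¹ * pb⁻¹ * px⁻¹ = 1 := by rw [← xb]; group
    rw [← h, px]; group
  · simp only [map_mul, map_inv, map_pow, FreeGroup.lift_apply_of, Matrix.cons_val_zero,
      Matrix.cons_val_one]
    have h : pa * py⁻¹ * pa⁻¹ * py⁻¹ = 1 := by rw [← ya]; group
    rw [← h, py]; group)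

lemma phi_a : phi pa = pa⁻¹ := PresentedGroup.toGroup.of _
lemma phi_b : phi pb = pb⁻¹ := PresentedGroup.toGroup.of _

lemma phi_phi : phi.comp phi = MonoidHom.id P := by
  apply PresentedGroup.ext
  intro i
  fin_cases i
  · change phi (phi pa) = pa
    simp [phi_a]
  · change phi (phi pb) = pb
    simp [phi_b]

def chiInv : P →* Rrˣ where
  toFun g := (chi g)⁻¹
  map_one' := by simp
  map_mul' g h := by rw [map_mul, mul_inv_rev]; exact mul_comm (chi h)⁻¹ (chi g)⁻¹

lemma chi_phi : chi.comp phi = chiInv := by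
  apply PresentedGroup.ext
  intro i
  fin_cases i
  · change chi (phi pa) = (chi pa)⁻¹
    simp [phi_a]
  · change chi (phi pb) = (chi pb)⁻¹
    simp [phi_b]

def phiE : P ≃* P := MonoidHom.toMulEquiv phi phi phi_phi phi_phi

def thM : P →* MonoidAlgebra Rr P where
  toFun g := MonoidAlgebra.single (phi g) (chi g : Rr)
  map_one' := by simp [MonoidAlgebra.one_def]
  map_mul' g h := by simp [MonoidAlgebra.single_mul_single]

def th : MonoidAlgebra Rr P →ₐ[Rr] MonoidAlgebra Rr P := MonoidAlgebra.lift Rr _ P thM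

lemma th_single (g : P) (r : Rr) :
    th (MonoidAlgebra.single g r) = MonoidAlgebra.single (phi g) ((chi g : Rr) * r) := by
  simp [th, thM, MonoidAlgebra.lift_single, mul_comm]

lemma th_th : th.comp th = AlgHom.id Rr _ := by
  apply MonoidAlgebra.algHom_ext
  on_goal 1 => intro g
  have h1 : phi (phi g) = g := DFunLike.congr_fun phi_phi g
  have h2 : chi (phi g) = (chi g)⁻¹ := DFunLike.congr_fun chi_phi g
  · simp [th_single, h1, h2]
  · ext

def thE : MonoidAlgebra Rr P ≃ₐ[Rr] MonoidAlgebra Rr P := AlgEquiv.ofAlgHom th th th_th th_th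

lemma G_mul (g h : P) : G (g * h) = G g * G h := map_mul _ _ _
lemma G_pow (g : P) (n : ℕ) : G (g ^ n) = G g ^ n := map_pow _ _ _

lemma th_G (g : P) : th (G g) = (chi g : Rr) • G (phi g) := by
  simp [G, th_single]

lemma phi_x : phi px = px⁻¹ := by simp [px, phi_a]
lemma phi_y : phi py = py⁻¹ := by simp [py, phi_b]
lemma phi_z : phi pz = pz := by
  rw [← zphi]; simp only [pz, map_pow, map_mul, phi_a, phi_b, map_inv]
  rw [inv_inv, inv_inv]; exact zphi.symm
lemma chi_x : chi px = -1 := by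
  rw [px, map_pow, chi_a]; ext
  simp only [us, Units.val_pow_eq_pow_val, Units.val_neg, Units.val_one]
  linear_combination s4
lemma chi_y : chi py = -1 := by
  rw [py, map_pow, chi_b]; ext
  simp only [ut, Units.val_pow_eq_pow_val, Units.val_neg, Units.val_one]
  linear_combination t4
lemma chi_z : chi pz = 1 := by
  have : chi pz = chi px * chi py := by
    simp only [pz, px, py, map_pow, map_mul]
    exact mul_pow (chi pa) (chi pb) 2
  rw [this, chi_x, chi_y]; exact (neg_one_mul (-1 : Rrˣ)).trans (neg_neg (1 : Rrˣ))

set_option linter.unusedSimpArgs false in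
set_option linter.unusedVariables false in
lemma abstract_sym {K M : Type*} [CommRing K] [Ring M] [Algebra K M] (s t : K)
    (hs : s ^ 4 = -1) (ht : t ^ 4 = -1) (th : M →ₐ[K] M) (x x' y y' z z' A B AB : M)
    (hx : th x = -x') (hx' : th x' = -x) (hy : th y = -y') (hy' : th y' = -y)
    (hz : th z = z) (hz' : th z' = z') (ha : th A = (-s ^ 2) • (x' * A))
    (hb : th B = (-t ^ 2) • (y' * B)) (hab : th AB = (s ^ 2 * t ^ 2) • (x' * y * AB))
    (o1 : x' * x = 1) (o2 : x * x' = 1) (o3 : y' * y = 1) (o4 : y * y' = 1)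
    (c1 : y * x = x * y) (c2 : y * x' = x' * y) (c3 : y' * x = x * y') (c4 : y' * x' = x' * y')
    (c5 : z * x = x * z) (c6 : z * x' = x' * z) (c7 : z' * x = x * z') (c8 : z' * x' = x' * z')
    (d5 : z * y = y * z) (d6 : z * y' = y' * z) (d7 : z' * y = y * z') (d8 : z' * y' = y' * z') :
    let U : M :=
      (1 + t ^ 2 • (x * z') - t ^ 2 • (x' * z') - s ^ 2 • (y * z') + s ^ 2 • (y' * z'))
      + s • ((-(s ^ 2 • x') + 1 - x' * y' * z + s ^ 2 • (y * z)) * A)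
      + t • ((x' * y' * z - t ^ 2 • (x * z) + t ^ 2 • (y' * z ^ 2) - z ^ 2) * B)
      + (s * t) • ((-(t ^ 2 • (x' * z')) - s ^ 2 • (y * z') + (s ^ 2 * t ^ 2) • z'
        + x' * y * z' + s ^ 2 • (x' * z' ^ 2) + t ^ 2 • (y * z' ^ 2)
        - z' ^ 2 - (s ^ 2 * t ^ 2) • (x' * y * z' ^ 2)) * AB)
    th U = U := by
  intro U
  have l : ∀ {u v w p : M}, u * v = w → u * (v * p) = w * p :=
    fun {u v w p} k => by rw [← mul_assoc, k]
  simp only [U, map_add, map_sub, map_neg, map_smul, map_mul, map_pow, map_one,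
    hx, hx', hy, hy', hz, hz', ha, hb, hab]
  simp only [add_mul, sub_mul, smul_mul_assoc, mul_smul_comm, neg_mul, mul_neg,
    one_mul, mul_one, neg_neg, pow_two z, pow_two z', mul_assoc, o1, o2, o3, o4,
    l o1, l o2, l o3, l o4, c1, c2, c3, c4, c5, c6, c7, c8, d5, d6, d7, d8,
    l c1, l c2, l c3, l c4, l c5, l c6, l c7, l c8, l d5, l d6, l d7, l d8]
  match_scalars <;> grind

lemma th_α : th αU = αU := by
  have hab : pa⁻¹ * pb⁻¹ = px⁻¹ * py * (pa * pb) := by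
    rw [ainv, mul_assoc, mul_assoc px⁻¹ py, ← mul_assoc py, ya, mul_assoc, binv]
  have hx : th (G px) = -G px⁻¹ := by rw [th_G, chi_x, phi_x]; simp
  have hx' : th (G px⁻¹) = -G px := by rw [th_G, map_inv, map_inv, chi_x, phi_x, inv_inv, show ((-1 : Rrˣ)⁻¹) = -1 from rfl]; simp
  have hy : th (G py) = -G py⁻¹ := by rw [th_G, chi_y, phi_y]; simp
  have hy' : th (G py⁻¹) = -G py := by rw [th_G, map_inv, map_inv, chi_y, phi_y, inv_inv, show ((-1 : Rrˣ)⁻¹) = -1 from rfl]; simp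
  have hz : th (G pz) = G pz := by rw [th_G, chi_z, phi_z]; simp
  have hz' : th (G pz⁻¹) = G pz⁻¹ := by rw [th_G, map_inv, map_inv, chi_z, phi_z]; simp
  have ha : th (G pa) = (-s ^ 2) • (G px⁻¹ * G pa) := by
    rw [th_G, chi_a, phi_a, ainv, G_mul]; rfl
  have hb : th (G pb) = (-t ^ 2) • (G py⁻¹ * G pb) := by
    rw [th_G, chi_b, phi_b, binv, G_mul]; rfl
  have hab' : th (G (pa * pb)) = (s ^ 2 * t ^ 2) • (G px⁻¹ * G py * G (pa * pb)) := by
    rw [th_G, map_mul, map_mul, chi_a, phi_a, chi_b, phi_b, hab, G_mul, G_mul]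
    congr 1
    exact neg_mul_neg (s ^ 2) (t ^ 2)
  have o1 : G px⁻¹ * G px = 1 := by rw [← G_mul, inv_mul_cancel]; exact map_one _
  have o2 : G px * G px⁻¹ = 1 := by rw [← G_mul, mul_inv_cancel]; exact map_one _
  have o3 : G py⁻¹ * G py = 1 := by rw [← G_mul, inv_mul_cancel]; exact map_one _
  have o4 : G py * G py⁻¹ = 1 := by rw [← G_mul, mul_inv_cancel]; exact map_one _
  have cm : ∀ {g h : P}, Commute g h → G h * G g = G g * G h := fun {g h} k => by
    rw [← G_mul, ← G_mul, k.eq]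
  have c1 := cm cxy
  have c2 := cm cxy.inv_left
  have c3 := cm cxy.inv_right
  have c4 := cm cxy.inv_inv
  have c5 := cm cxz
  have c6 := cm cxz.inv_left
  have c7 := cm cxz.inv_right
  have c8 := cm cxz.inv_inv
  have d5 := cm cyz
  have d6 := cm cyz.inv_left
  have d7 := cm cyz.inv_right
  have d8 := cm cyz.inv_inv
  simp only [αU, α1, αa, αb, αab, G_mul px, G_mul px⁻¹, G_mul py, G_mul py⁻¹,
    G_mul (px⁻¹ * py), G_mul (px⁻¹ * py⁻¹), G_pow]
  exact abstract_sym s t s4 t4 th _ _ _ _ _ _ _ _ _ hx hx' hy hy' hz hz' ha hb hab' o1 o2 o3 o4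
    c1 c2 c3 c4 c5 c6 c7 c8 d5 d6 d7 d8

theorem alpha_theta0_symmetric :
    ∃ (φ : P ≃* P) (χ : P →* Rrˣ)
      (θ : MonoidAlgebra Rr P ≃ₐ[Rr] MonoidAlgebra Rr P),
      φ pa = pa⁻¹ ∧ φ pb = pb⁻¹ ∧
      ((χ pa : Rr) = -s ^ 2) ∧ ((χ pb : Rr) = -t ^ 2) ∧
      (∀ (g : P) (r : Rr),
        θ (MonoidAlgebra.single g r) = MonoidAlgebra.single (φ g) ((χ g : Rr) * r)) ∧
      θ αU = αU :=
  ⟨phiE, chi, thE, phi_a, phi_b, by rw [chi_a]; rfl, by rw [chi_b]; rfl, th_single, th_α⟩
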